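/- arXiv:1804.02582 — 2 statements merged into one kernel-verified Lean document; each statement's English description precedes it below -/
import Mathlib

section
/- Let m and p be finite index types, let A be an invertible (m ⊕ p) × (m ⊕ p) complex matrix (the blocks indexed by m corresponding to boundary degrees of freedom and those indexed by p to interior ones), and let M be an m × m complex matrix. Define the (m ⊕ p) × (m ⊕ p) matrix B as the block matrix with upper-left block M and all other blocks zero, and define the m × m matrix T := (A⁻¹)₁₁ · M, where (A⁻¹)₁₁ denotes the upper-left m × m block of A⁻¹. Then for every nonzero λ ∈ ℂ the following are equivalent: (i) there exists a nonzero vector u ∈ ℂ^(m ⊕ p) with A u = −λ · B u; (ii) there exists a nonzero vector g ∈ ℂ^m with T g = (−1/λ) · g. Moreover, in the direction (i) ⟹ (ii) one may take g to be the m-component (boundary restriction) of u. -/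
/-!
Write `ρ` for the restriction of a vector to the boundary block and `X` for the product of `A⁻¹`
with the block column of `M` and `0`. Then `A⁻¹ B = X ∘ ρ` and `T = ρ ∘ X`. For invertible `λ` the
generalized problem says that `u` is an eigenvector of `X ∘ ρ` with eigenvalue `-λ⁻¹`. Two maps
composed in either order have the same invertible eigenvalues, and `ρ` carries the eigenvectors of
`X ∘ ρ` to eigenvectors of `ρ ∘ X`.
-/

open Matrix Module.End

section BlockMatrices

variable {R l m n o p : Type*} [Fintype m] [Fintype p]

theorem mul_fromBlocks_zero [Semiring R] (C : Matrix l (m ⊕ p) R) (M : Matrix m n R) :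
    C * fromBlocks M (0 : Matrix m o R) (0 : Matrix p n R) 0 =
      fromCols (C * fromRows M (0 : Matrix p n R)) 0 := by
  rw [← fromCols_fromRows_eq_fromBlocks, fromRows_zero, mul_fromCols, Matrix.mul_zero]

theorem toBlocks₁₁_mul [Semiring R] (C : Matrix (l ⊕ o) (m ⊕ p) R) (M : Matrix m n R) :
    C.toBlocks₁₁ * M = (C * fromRows M (0 : Matrix p n R)).toRows₁ := by
  conv_rhs => rw [← fromBlocks_toBlocks C, fromBlocks_mul_fromRows, Matrix.mul_zero, add_zero,
    toRows₁_fromRows]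

theorem mulVecLin_fromCols_zero [CommSemiring R] (X : Matrix l m R) :
    (fromCols X (0 : Matrix l p R)).mulVecLin = X.mulVecLin ∘ₗ LinearMap.funLeft R R Sum.inl := by
  ext1 u
  simp [LinearMap.funLeft]

theorem mulVecLin_toRows₁ [CommSemiring R] (X : Matrix (l ⊕ o) m R) :
    X.toRows₁.mulVecLin = LinearMap.funLeft R R Sum.inl ∘ₗ X.mulVecLin :=
  rfl

end BlockMatrices

section Eigenvectors

variable {R V W : Type*} [CommRing R] [AddCommGroup V] [Module R V] [AddCommGroup W] [Module R W]

theorem hasEigenvector_comp_comm {f : W →ₗ[R] V} {g : V →ₗ[R] W} {μ : R} {v : V}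
    (hμ : IsSMulRegular V μ) (hv : HasEigenvector (f ∘ₗ g) μ v) :
    HasEigenvector (g ∘ₗ f) μ (g v) := by
  have hfg : f (g v) = μ • v := hv.apply_eq_smul
  refine hasEigenvector_iff.mpr ⟨mem_eigenspace_iff.mpr ?_, fun hgv ↦ hv.2 ?_⟩
  · rw [LinearMap.comp_apply, hfg, map_smul]
  · exact hμ.right_eq_zero_of_smul (by rw [← hfg, hgv, map_zero])

theorem exists_hasEigenvector_comp_comm {f : W →ₗ[R] V} {g : V →ₗ[R] W} {μ : R}
    (hμ : IsUnit μ) :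
    (∃ v, HasEigenvector (f ∘ₗ g) μ v) ↔ ∃ w, HasEigenvector (g ∘ₗ f) μ w :=
  ⟨fun ⟨v, hv⟩ ↦ ⟨g v, hasEigenvector_comp_comm (hμ.isSMulRegular V) hv⟩,
    fun ⟨w, hw⟩ ↦ ⟨f w, hasEigenvector_comp_comm (hμ.isSMulRegular W) hw⟩⟩

theorem hasEigenvector_inv_mul_iff {n : Type*} [Fintype n] [DecidableEq n] {A : Matrix n n R}
    (hA : IsUnit A) (B : Matrix n n R) (lam : Rˣ) (u : n → R) :
    HasEigenvector (A⁻¹ * B).mulVecLin (-↑lam⁻¹) u ↔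
      u ≠ 0 ∧ A *ᵥ u = (-lam : R) • B *ᵥ u := by
  have hdet : IsUnit A.det := (isUnit_iff_isUnit_det A).mp hA
  rw [hasEigenvector_iff, mem_eigenspace_iff, mulVecLin_apply, and_comm]
  refine and_congr_right fun _ ↦ ?_
  calc (A⁻¹ * B) *ᵥ u = (-↑lam⁻¹ : R) • u
      ↔ A *ᵥ ((A⁻¹ * B) *ᵥ u) = A *ᵥ ((-↑lam⁻¹ : R) • u) :=
        (mulVec_injective_of_isUnit hA).eq_iff.symm
    _ ↔ B *ᵥ u = (-lam)⁻¹ • A *ᵥ u := by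
        rw [mulVec_mulVec, mul_nonsing_inv_cancel_left _ _ hdet, mulVec_smul, ← Units.val_neg,
          ← inv_neg, ← Units.smul_def]
    _ ↔ A *ᵥ u = (-lam : R) • B *ᵥ u := by
        rw [eq_inv_smul_iff, eq_comm, Units.smul_def, Units.val_neg]

theorem steklov_boundary_reduction_general
    {m p : Type*} [Fintype m] [Fintype p] [DecidableEq m] [DecidableEq p]
    {A : Matrix (m ⊕ p) (m ⊕ p) R} (hA : IsUnit A) (M : Matrix m m R) (lam : Rˣ) :
    ((∃ u : (m ⊕ p) → R, u ≠ 0 ∧ A *ᵥ u = (-lam : R) • fromBlocks M 0 0 0 *ᵥ u) ↔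
      (∃ g : m → R, g ≠ 0 ∧ (A⁻¹.toBlocks₁₁ * M) *ᵥ g = (-↑lam⁻¹ : R) • g)) ∧
    (∀ u : (m ⊕ p) → R, u ≠ 0 → A *ᵥ u = (-lam : R) • fromBlocks M 0 0 0 *ᵥ u →
      u ∘ Sum.inl ≠ 0 ∧
        (A⁻¹.toBlocks₁₁ * M) *ᵥ (u ∘ Sum.inl) = (-↑lam⁻¹ : R) • (u ∘ Sum.inl)) := by
  let X := (A⁻¹ * fromRows M (0 : Matrix p m R)).mulVecLin
  let ρ := LinearMap.funLeft R R (Sum.inl : m → m ⊕ p)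
  have hfull (u) : HasEigenvector (X ∘ₗ ρ) (-↑lam⁻¹) u ↔
      u ≠ 0 ∧ A *ᵥ u = (-lam : R) • fromBlocks M 0 0 0 *ᵥ u := by
    rw [← hasEigenvector_inv_mul_iff hA, mul_fromBlocks_zero, mulVecLin_fromCols_zero]
  have hboundary (g) : HasEigenvector (ρ ∘ₗ X) (-↑lam⁻¹) g ↔
      g ≠ 0 ∧ (A⁻¹.toBlocks₁₁ * M) *ᵥ g = (-↑lam⁻¹ : R) • g := by
    rw [← mulVecLin_toRows₁, ← toBlocks₁₁_mul, hasEigenvector_iff, mem_eigenspace_iff,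
      mulVecLin_apply, and_comm]
  have hunit : IsUnit (-↑lam⁻¹ : R) := lam⁻¹.isUnit.neg
  simp only [← and_imp, ← hfull, ← hboundary]
  exact ⟨exists_hasEigenvector_comp_comm hunit,
    fun _ hu ↦ hasEigenvector_comp_comm (hunit.isSMulRegular _) hu⟩

end Eigenvectors

/-- Boundary reduction underlying the S-RIM algorithm: nonzero eigenvalues `λ` of the
generalized problem `A u = -λ B u` (with `B` supported on the boundary block) correspond
exactly to eigenvalues `μ = -1/λ` of the boundary matrix `T = (A⁻¹)₁₁ M`, and one may
take the eigenvector of `T` to be the boundary restriction of `u`. -/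
theorem steklov_boundary_reduction
    {m p : Type*} [Fintype m] [Fintype p] [DecidableEq m] [DecidableEq p]
    (A : Matrix (m ⊕ p) (m ⊕ p) ℂ) (hA : IsUnit A)
    (M : Matrix m m ℂ)
    (B : Matrix (m ⊕ p) (m ⊕ p) ℂ) (hB : B = Matrix.fromBlocks M 0 0 0)
    (T : Matrix m m ℂ) (hT : T = (A⁻¹).toBlocks₁₁ * M)
    (lam : ℂ) (hlam : lam ≠ 0) :
    ((∃ u : (m ⊕ p) → ℂ, u ≠ 0 ∧ A.mulVec u = (-lam) • B.mulVec u) ↔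
      (∃ g : m → ℂ, g ≠ 0 ∧ T.mulVec g = (-1 / lam) • g)) ∧
    (∀ u : (m ⊕ p) → ℂ, u ≠ 0 → A.mulVec u = (-lam) • B.mulVec u →
      u ∘ Sum.inl ≠ 0 ∧ T.mulVec (u ∘ Sum.inl) = (-1 / lam) • (u ∘ Sum.inl)) := by
  subst hB hT
  simpa [neg_div] using steklov_boundary_reduction_general hA M (Units.mk0 lam hlam)
end

section
/- Let T be an n × n complex matrix, let c ∈ ℂ and r > 0, and assume that z·I − T is invertible for every z on the circle {z : |z − c| = r}. Let μ ∈ ℂ with |μ − c| < r, and let v ∈ ℂⁿ be a generalized eigenvector of T for μ, i.e. (μ·I − T)^n v = 0. Then (1/(2πi)) ∮_{|z−c|=r} (z·I − T)⁻¹ v dz = v, where the contour integral is taken counterclockwise over the circle. -/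
open Metric

/-!
On a vector `v` killed by a power of `T - μ`, the geometric series for `(z - T)⁻¹` in powers of
`(z - μ)⁻¹ (T - μ)` terminates, so `z ↦ (z - T)⁻¹ v` is the principal part of a Laurent series at
`μ` whose coefficient at `(z - μ)⁻¹` is `v`. Cauchy's theorem picks out this residue.
-/

lemma algebraMap_sub_mul_sum_zpow_smul {K A : Type*} [Field K] [Ring A] [Algebra K A] (a : A)
    {μ z : K} (hz : z ≠ μ) (n : ℕ) :
    (algebraMap K A z - a) *
        ∑ k ∈ Finset.range n, (z - μ) ^ (-(k + 1 : ℤ)) • (a - μ • (1 : A)) ^ k =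
      1 - ((z - μ)⁻¹ • (a - μ • (1 : A))) ^ n := by
  have hw : z - μ ≠ 0 := sub_ne_zero.2 hz
  have hfactor : algebraMap K A z - a = (z - μ) • (1 - (z - μ)⁻¹ • (a - μ • (1 : A))) := by
    rw [smul_sub, smul_inv_smul₀ hw, sub_smul, Algebra.algebraMap_eq_smul_one]
    abel
  rw [hfactor, ← mul_neg_geom_sum, smul_mul_assoc, ← mul_smul_comm, Finset.smul_sum]
  congr! 2 with k
  rw [smul_smul, ← zpow_one_add₀ hw, smul_pow, inv_pow, ← zpow_natCast, ← zpow_neg]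
  congr 2
  ring

lemma resolvent_apply_eq_sum_zpow_smul {K V : Type*} [Field K] [AddCommGroup V] [Module K V]
    {T : Module.End K V} {μ z : K} {v : V} {n : ℕ} (hz : z ∈ resolventSet K T) (hzμ : z ≠ μ)
    (hv : ((T - μ • (1 : Module.End K V)) ^ n) v = 0) :
    resolvent T z v =
      ∑ k ∈ Finset.range n,
        (z - μ) ^ (-(k + 1 : ℤ)) • ((T - μ • (1 : Module.End K V)) ^ k) v := by
  have hsum := LinearMap.congr_fun (algebraMap_sub_mul_sum_zpow_smul T hzμ n) v
  simp only [Module.End.mul_apply, LinearMap.sub_apply _ _ v, smul_pow, LinearMap.smul_apply,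
    LinearMap.sum_apply, hv, smul_zero, sub_zero, Module.End.one_apply] at hsum
  nth_rw 1 [← hsum]
  rw [← Module.End.mul_apply, resolvent, Ring.inverse_mul_cancel _ hz, Module.End.one_apply]

lemma circleIntegral_sum_zpow_smul {E : Type*} [NormedAddCommGroup E] [NormedSpace ℂ E]
    [CompleteSpace E] {c μ : ℂ} {r : ℝ} (hμ : μ ∈ ball c r) (u : ℕ → E) (n : ℕ) :
    (∮ z in C(c, r), ∑ k ∈ Finset.range (n + 1), (z - μ) ^ (-(k + 1 : ℤ)) • u k) =
      (2 * Real.pi * Complex.I : ℂ) • u 0 := by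
  have hμ_sphere : μ ∉ sphere c |r| := by
    rw [abs_of_pos (pos_of_mem_ball hμ)]
    exact Set.disjoint_right.1 sphere_disjoint_ball hμ
  have hintegrable (k : ℕ) : CircleIntegrable (fun z => (z - μ) ^ (-(k + 1 : ℤ)) • u k) c r :=
    have hzpow : CircleIntegrable (fun z => (z - μ) ^ (-(k + 1 : ℤ))) c r :=
      circleIntegrable_sub_zpow_iff.2 (.inr (.inr hμ_sphere))
    ⟨hzpow.1.smul_const (u k), hzpow.2.smul_const (u k)⟩
  rw [circleIntegral.integral_fun_sum fun k _ => hintegrable k, Finset.sum_range_succ']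
  simp only [circleIntegral.integral_smul_const]
  have hresidue : (∮ z in C(c, r), (z - μ) ^ (-((0 : ℕ) + 1 : ℤ))) = 2 * Real.pi * Complex.I := by
    simpa using circleIntegral.integral_sub_inv_of_mem_ball hμ
  have hhigher (k : ℕ) : (∮ z in C(c, r), (z - μ) ^ (-((k + 1 : ℕ) + 1 : ℤ))) = 0 :=
    circleIntegral.integral_sub_zpow_of_ne (by lia) c μ r
  simp only [hresidue, hhigher, zero_smul, Finset.sum_const_zero, zero_add]

theorem riesz_projection_eq_id_on_generalized_eigenspace_general {E : Type*}
    [NormedAddCommGroup E] [NormedSpace ℂ E] [CompleteSpace E] {T : Module.End ℂ E} {c μ : ℂ}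
    {r : ℝ} (hres : sphere c r ⊆ resolventSet ℂ T) (hμ : μ ∈ ball c r) {v : E}
    (hv : v ∈ T.maxGenEigenspace μ) :
    (2 * Real.pi * Complex.I : ℂ)⁻¹ • (∮ z in C(c, r), resolvent T z v) = v := by
  obtain ⟨n, hn⟩ := (T.mem_maxGenEigenspace μ v).1 hv
  have hn_succ : ((T - μ • (1 : Module.End ℂ E)) ^ (n + 1)) v = 0 := by
    rw [pow_succ', Module.End.mul_apply, hn, map_zero]
  have hlaurent : Set.EqOn (fun z => resolvent T z v)
      (fun z => ∑ k ∈ Finset.range (n + 1),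
        (z - μ) ^ (-(k + 1 : ℤ)) • ((T - μ • (1 : Module.End ℂ E)) ^ k) v) (sphere c r) :=
    fun z hz => resolvent_apply_eq_sum_zpow_smul (hres hz)
      (sphere_disjoint_ball.ne_of_mem hz hμ) hn_succ
  rw [circleIntegral.integral_congr (pos_of_mem_ball hμ).le hlaurent,
    circleIntegral_sum_zpow_smul hμ, pow_zero, Module.End.one_apply,
    inv_smul_smul₀ Complex.two_pi_I_ne_zero]

lemma map_ringInverse_mulEquiv {M₀ N₀ : Type*} [MonoidWithZero M₀] [MonoidWithZero N₀]
    (e : M₀ ≃* N₀) (a : M₀) : e (Ring.inverse a) = Ring.inverse (e a) := by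
  by_cases ha : IsUnit a
  · obtain ⟨u, rfl⟩ := ha
    rw [Ring.inverse_unit]
    exact (Ring.inverse_unit (Units.mapEquiv e u)).symm
  · have hea : ¬IsUnit (e a) := by rwa [MulEquiv.isUnit_map]
    rw [Ring.inverse_non_unit _ ha, Ring.inverse_non_unit _ hea, map_zero]

section ToLin

variable {R ι : Type*} [CommRing R] [Fintype ι] [DecidableEq ι]

lemma toLinAlgEquiv'_smul_one_sub (T : Matrix ι ι R) (z : R) :
    Matrix.toLinAlgEquiv' (z • (1 : Matrix ι ι R) - T) =
      algebraMap R (Module.End R (ι → R)) z - Matrix.toLinAlgEquiv' T := by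
  rw [map_sub, ← Algebra.algebraMap_eq_smul_one, AlgEquiv.commutes]

lemma mem_resolventSet_toLinAlgEquiv'_iff {T : Matrix ι ι R} {z : R} :
    z ∈ resolventSet R (Matrix.toLinAlgEquiv' T) ↔ IsUnit (z • (1 : Matrix ι ι R) - T) := by
  rw [spectrum.mem_resolventSet_iff, ← toLinAlgEquiv'_smul_one_sub, MulEquiv.isUnit_map]

lemma resolvent_toLinAlgEquiv'_apply (T : Matrix ι ι R) (z : R) (v : ι → R) :
    resolvent (Matrix.toLinAlgEquiv' T) z v = (z • (1 : Matrix ι ι R) - T)⁻¹.mulVec v := by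
  rw [resolvent, ← toLinAlgEquiv'_smul_one_sub, Matrix.nonsing_inv_eq_ringInverse,
    ← Matrix.toLinAlgEquiv'_apply]
  exact (LinearMap.congr_fun
    (map_ringInverse_mulEquiv (Matrix.toLinAlgEquiv' (R := R) (n := ι)).toMulEquiv _) v).symm

lemma mem_maxGenEigenspace_toLinAlgEquiv'_iff {T : Matrix ι ι R} {μ : R} {v : ι → R} :
    v ∈ Module.End.maxGenEigenspace (Matrix.toLinAlgEquiv' T) μ ↔
      ∃ k : ℕ, ((μ • (1 : Matrix ι ι R) - T) ^ k).mulVec v = 0 := by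
  have hneg : Matrix.toLinAlgEquiv' T - μ • (1 : Module.End R (ι → R)) =
      (-1 : R) • Matrix.toLinAlgEquiv' (μ • (1 : Matrix ι ι R) - T) := by
    rw [toLinAlgEquiv'_smul_one_sub, Algebra.algebraMap_eq_smul_one]
    module
  simp only [Module.End.mem_maxGenEigenspace, hneg, smul_pow, ← map_pow, LinearMap.smul_apply,
    Matrix.toLinAlgEquiv'_apply, (isUnit_neg_one.pow _).smul_eq_zero]

end ToLin

/-- The Riesz spectral projection `E = (1/2πi) ∮_Γ (zI - T)⁻¹ dz` acts as the identity on
generalized eigenvectors of eigenvalues `μ` lying inside the contour `Γ`. -/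
theorem riesz_projection_eq_id_on_generalized_eigenspace
    (n : ℕ) (T : Matrix (Fin n) (Fin n) ℂ) (c : ℂ) (r : ℝ) (hr : 0 < r)
    (hres : ∀ z ∈ sphere c r, IsUnit (z • (1 : Matrix (Fin n) (Fin n) ℂ) - T))
    (μ : ℂ) (hμ : μ ∈ ball c r)
    (v : Fin n → ℂ)
    (hv : ((μ • (1 : Matrix (Fin n) (Fin n) ℂ) - T) ^ n).mulVec v = 0) :
    (2 * Real.pi * Complex.I : ℂ)⁻¹ •
      (∮ z in C(c, r), ((z • (1 : Matrix (Fin n) (Fin n) ℂ) - T)⁻¹).mulVec v) = v := by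
  simpa only [resolvent_toLinAlgEquiv'_apply] using
    riesz_projection_eq_id_on_generalized_eigenspace_general (T := Matrix.toLinAlgEquiv' T)
      (fun z hz => mem_resolventSet_toLinAlgEquiv'_iff.2 (hres z hz)) hμ
      (mem_maxGenEigenspace_toLinAlgEquiv'_iff.2 ⟨n, hv⟩)
end
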